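/- Every formal meromorphic solution of the A_4^(1) system converges: if (c_n^i) is a formal meromorphic solution at t_0 of pole order 1, then each Laurent series f_i = Σ_{n ≥ −1} c_n^i (t − t_0)^n has positive radius of convergence, and the resulting functions form a genuine holomorphic solution of the A_4^(1) system on a punctured disk around t_0. -/

import Mathlib

/-!
Shift the coefficients to `a m = c (m - 1)`, so that `fᵢ = Fᵢ / T` with `Fᵢ = ∑ₘ a m i Tᵐ`, and the
recurrence becomes `(m - 1) a_m = K a_m + (convolution of the a_p, 0 < p < m)` for `m ≥ 3`, where `K`
is a fixed linear map depending on `a_0` only. Its norm is at most `C = 8 ‖a_0‖`, so `m - 1 - K` is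
invertible with inverse of norm `≤ 2 / (m - 1)` once `m - 1 ≥ 2 C`; resonances only occur for finitely
many `m` and are irrelevant for convergence. The convolution has `m - 1` terms, and that factor
is cancelled by `2 / (m - 1)`, so a bound `‖a_m‖ ≤ R ^ m / 8` for `m ≥ 1` propagates by induction as soon as `R` is
large enough to cover the initial `m` (`geometric_bound`, `shifted_bound`).

On `|T| < 1 / (2 R)` the series `Fᵢ` may then be differentiated termwise (`hasDerivAt_powerSeries`), and
the recurrence, read through the Cauchy product, says `T Fᵢ' - Fᵢ = Fᵢ Gᵢ + αᵢ T²`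
(`series_equation`). Dividing by `T²` gives the system for `fᵢ = Fᵢ / T`.
-/

open Metric

/-- A formal meromorphic solution of the `A₄⁽¹⁾` system
`fᵢ' = fᵢ (fᵢ₊₁ − fᵢ₊₂ + fᵢ₊₃ − fᵢ₊₄) + αᵢ` (indices mod 5) at a point `t₀`,
of pole order `r ≥ 1`: a family of coefficients `c i n` (`i : Fin 5`, `n : ℤ`)
vanishing for `n < -r`, with nonzero leading vector, satisfying the formal
Laurent-series recurrence `n cₙⁱ = Σ_{k=-r}^{n+r-1} cₖⁱ G_{n-k-1}ⁱ + δ_{n,1} αᵢ`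
where `Gₙⁱ = cₙ^{i+1} − cₙ^{i+2} + cₙ^{i+3} − cₙ^{i+4}`. -/
def IsFormalMeromSolA4 (α : Fin 5 → ℂ) (r : ℤ) (c : Fin 5 → ℤ → ℂ) : Prop :=
  1 ≤ r ∧
  (∃ i : Fin 5, c i (-r) ≠ 0) ∧
  (∀ (i : Fin 5) (n : ℤ), n < -r → c i n = 0) ∧
  ∀ (i : Fin 5) (n : ℤ),
    (n : ℂ) * c i n =
      (∑ k ∈ Finset.Icc (-r) (n + r - 1),
        c i k * (c (i + 1) (n - k - 1) - c (i + 2) (n - k - 1) +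
          c (i + 3) (n - k - 1) - c (i + 4) (n - k - 1))) +
      (if n = 1 then α i else 0)

/-- The sum of the Laurent series with pole order 1 and coefficients `c i n`
centered at `t₀`. -/
noncomputable def laurentA4 (t0 : ℂ) (c : Fin 5 → ℤ → ℂ) (i : Fin 5) (s : ℂ) : ℂ :=
  c i (-1) / (s - t0) + ∑' n : ℕ, c i (n : ℤ) * (s - t0) ^ n

/-! ### Geometric growth of the coefficients -/

/-- The alternating combination `v_{i+1} - v_{i+2} + v_{i+3} - v_{i+4}` of the system. -/
def altA4 (v : Fin 5 → ℂ) (i : Fin 5) : ℂ := v (i + 1) - v (i + 2) + v (i + 3) - v (i + 4)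

lemma norm_altA4_le (v : Fin 5 → ℂ) (i : Fin 5) : ‖altA4 v i‖ ≤ 4 * ‖v‖ := by
  unfold altA4
  have h1 := norm_sub_le (v (i + 1) - v (i + 2) + v (i + 3)) (v (i + 4))
  have h2 := norm_add_le (v (i + 1) - v (i + 2)) (v (i + 3))
  have h3 := norm_sub_le (v (i + 1)) (v (i + 2))
  linarith [norm_le_pi_norm v (i + 1), norm_le_pi_norm v (i + 2), norm_le_pi_norm v (i + 3),
    norm_le_pi_norm v (i + 4)]

/-- A quadratic recursive inequality with a gain `m - 1` on the left forces geometric growth: the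
gain compensates the number of terms of the convolution. -/
lemma geometric_bound (b : ℕ → ℝ) (hb : ∀ m, 0 ≤ b m) (C : ℝ)
    (h : ∀ m : ℕ, 3 ≤ m →
      ((m : ℝ) - 1) * b m ≤ C * b m + 4 * ∑ p ∈ Finset.Ico 1 m, b p * b (m - p)) :
    ∃ R > (0 : ℝ), ∃ M : ℝ, ∀ m, b m ≤ M * R ^ m := by
  -- For `m ≥ N + 3` one has `m - 1 - C ≥ (m - 1) / 2`; `R` covers the finitely many smaller `m`.
  obtain ⟨N, hN⟩ := exists_nat_ge (2 * C + 3)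
  set R : ℝ := 1 + 8 * ∑ m ∈ Finset.range (N + 3), b m with hR
  have hS : 0 ≤ ∑ m ∈ Finset.range (N + 3), b m := Finset.sum_nonneg fun m _ => hb m
  have hR1 : 1 ≤ R := by linarith
  have key : ∀ m : ℕ, 1 ≤ m → b m ≤ 1 / 8 * R ^ m := by
    intro m
    induction m using Nat.strong_induction_on with
    | _ m ih =>
      intro hm
      by_cases hmN : m < N + 3
      · have h1 : b m ≤ ∑ m ∈ Finset.range (N + 3), b m :=
          Finset.single_le_sum (f := b) (fun m _ => hb m) (Finset.mem_range.2 hmN)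
        have h2 : R ≤ R ^ m := le_self_pow₀ hR1 (by omega)
        linarith
      · push Not at hmN
        have h1 := h m (by omega)
        have h2 : ∑ p ∈ Finset.Ico 1 m, b p * b (m - p) ≤
            ∑ p ∈ Finset.Ico 1 m, 1 / 64 * R ^ m := by
          refine Finset.sum_le_sum fun p hp => ?_
          rw [Finset.mem_Ico] at hp
          calc b p * b (m - p) ≤ (1 / 8 * R ^ p) * (1 / 8 * R ^ (m - p)) :=
                mul_le_mul (ih p (by omega) hp.1) (ih (m - p) (by omega) (by omega)) (hb _)
                  (by positivity)
            _ = 1 / 64 * (R ^ p * R ^ (m - p)) := by ring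
            _ = 1 / 64 * R ^ m := by rw [← pow_add]; congr 2; omega
        rw [Finset.sum_const, Nat.card_Ico, nsmul_eq_mul, Nat.cast_sub hm, Nat.cast_one] at h2
        have hm' : (N : ℝ) + 3 ≤ m := by exact_mod_cast hmN
        have hC : ((m : ℝ) - 1) / 2 * b m ≤ ((m : ℝ) - 1 - C) * b m :=
          mul_le_mul_of_nonneg_right (by linarith) (hb m)
        have hpos : 0 < ((m : ℝ) - 1) / 2 := by
          have : (3 : ℝ) ≤ m := by exact_mod_cast (by omega : 3 ≤ m)
          linarith
        refine le_of_mul_le_mul_left ?_ hpos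
        -- The constant `1 / 8` closes the induction: `4 * (1 / 8) ^ 2 = (1 / 2) * (1 / 8)`.
        linarith
  refine ⟨R, by linarith, b 0 + 1 / 8, fun m => ?_⟩
  rcases Nat.eq_zero_or_pos m with rfl | hm
  · simp
  · have h1 := key m hm
    have h2 : 0 ≤ b 0 * R ^ m := mul_nonneg (hb 0) (by positivity)
    linarith

/-- The recurrence for the shifted coefficients `a m = c (m - 1)`. -/
def ShiftedRec (α : Fin 5 → ℂ) (a : ℕ → Fin 5 → ℂ) : Prop :=
  ∀ (i : Fin 5) (m : ℕ), ((m : ℂ) - 1) * a m i =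
    (∑ p ∈ Finset.range (m + 1), a p i * altA4 (a (m - p)) i) + (if m = 2 then α i else 0)

lemma IsFormalMeromSolA4.shiftedRec {α : Fin 5 → ℂ} {c : Fin 5 → ℤ → ℂ}
    (h : IsFormalMeromSolA4 α 1 c) : ShiftedRec α (fun m i => c i ((m : ℤ) - 1)) := by
  intro i m
  have h1 := h.2.2.2 i ((m : ℤ) - 1)
  have hif : ((m : ℤ) - 1 = 1) = (m = 2) := by
    apply propext; omega
  simp only [hif] at h1
  push_cast at h1
  rw [h1]
  congr 1
  symm
  refine Finset.sum_bij (fun p _ => (p : ℤ) - 1) ?_ ?_ ?_ ?_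
  · intro p hp
    rw [Finset.mem_range] at hp
    rw [Finset.mem_Icc]; omega
  · intro p _ q _ hpq
    omega
  · intro k hk
    rw [Finset.mem_Icc] at hk
    exact ⟨(k + 1).toNat, by rw [Finset.mem_range]; omega, by omega⟩
  · intro p hp
    rw [Finset.mem_range] at hp
    have e : ((m - p : ℕ) : ℤ) - 1 = (m : ℤ) - 1 - ((p : ℤ) - 1) - 1 := by omega
    simp only [altA4, e]

lemma shifted_bound {α : Fin 5 → ℂ} {a : ℕ → Fin 5 → ℂ} (h : ShiftedRec α a) :
    ∃ R > (0 : ℝ), ∃ M : ℝ, ∀ m, ‖a m‖ ≤ M * R ^ m := by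
  refine geometric_bound (fun m => ‖a m‖) (fun m => norm_nonneg _) (8 * ‖a 0‖) fun m hm => ?_
  have hm1 : (0 : ℝ) < (m : ℝ) - 1 := by
    have : (3 : ℝ) ≤ m := by exact_mod_cast hm
    linarith
  have hterm : ∀ p q i, ‖a p i * altA4 (a q) i‖ ≤ 4 * (‖a p‖ * ‖a q‖) := fun p q i => by
    rw [norm_mul]
    calc ‖a p i‖ * ‖altA4 (a q) i‖ ≤ ‖a p‖ * (4 * ‖a q‖) :=
          mul_le_mul (norm_le_pi_norm _ _) (norm_altA4_le _ _) (norm_nonneg _) (norm_nonneg _)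
      _ = _ := by ring
  have hpt : ∀ i, ((m : ℝ) - 1) * ‖a m i‖ ≤
      8 * ‖a 0‖ * ‖a m‖ + 4 * ∑ p ∈ Finset.Ico 1 m, ‖a p‖ * ‖a (m - p)‖ := by
    intro i
    have h1 := congrArg norm (h i m)
    have hn : ‖(m : ℂ) - 1‖ = (m : ℝ) - 1 := by
      have : (m : ℂ) - 1 = (((m : ℝ) - 1 : ℝ) : ℂ) := by push_cast; rfl
      rw [this, Complex.norm_of_nonneg hm1.le]
    rw [if_neg (by omega), add_zero, norm_mul, hn] at h1
    rw [h1]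
    calc _ ≤ ∑ p ∈ Finset.range (m + 1), 4 * (‖a p‖ * ‖a (m - p)‖) :=
          norm_sum_le_of_le _ fun p _ => hterm _ _ _
      _ = _ := by
        rw [Finset.sum_range_succ, Finset.range_eq_Ico,
          -- The terms `p = 0` and `p = m` form the linear part `8 ‖a 0‖ ‖a m‖`.
          Finset.sum_eq_sum_Ico_succ_bot (by omega), Finset.mul_sum]
        simp only [Nat.sub_zero, Nat.sub_self, zero_add]
        ring
  have hle : ‖a m‖ ≤ (8 * ‖a 0‖ * ‖a m‖ + 4 * ∑ p ∈ Finset.Ico 1 m, ‖a p‖ * ‖a (m - p)‖)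
      / ((m : ℝ) - 1) := by
    refine (pi_norm_le_iff_of_nonneg (by positivity)).2 fun i => ?_
    rw [le_div_iff₀ hm1]
    linarith [hpt i]
  rw [le_div_iff₀ hm1] at hle
  linarith

/-! ### The regularised series and their differential equation -/

lemma HasSum.congr_both {f g : ℕ → ℂ} {x y : ℂ} (h : HasSum f x) (hfg : ∀ m, g m = f m)
    (hxy : y = x) : HasSum g y := by
  rw [hxy, show g = f from funext hfg]
  exact h

lemma norm_term_le {u : ℕ → ℂ} {M R : ℝ} (hR : 0 < R) (hu : ∀ m, ‖u m‖ ≤ M * R ^ m) {s : ℂ}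
    (hs : ‖s‖ ≤ 1 / (2 * R)) (m : ℕ) : ‖u m * s ^ m‖ ≤ M * (1 / 2) ^ m := by
  rw [norm_mul, norm_pow]
  calc ‖u m‖ * ‖s‖ ^ m ≤ (M * R ^ m) * (1 / (2 * R)) ^ m :=
        mul_le_mul (hu m) (pow_le_pow_left₀ (norm_nonneg _) hs m) (by positivity)
          ((norm_nonneg _).trans (hu m))
    _ = M * (R * (1 / (2 * R))) ^ m := by rw [mul_pow]; ring
    _ = _ := by congr 2; field_simp

lemma summable_norm_powerSeries {u : ℕ → ℂ} {M R : ℝ} (hR : 0 < R)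
    (hu : ∀ m, ‖u m‖ ≤ M * R ^ m) {s : ℂ} (hs : ‖s‖ ≤ 1 / (2 * R)) :
    Summable fun m => ‖u m * s ^ m‖ :=
  Summable.of_nonneg_of_le (fun _ => norm_nonneg _) (norm_term_le hR hu hs)
    ((summable_geometric_of_lt_one (by norm_num) (by norm_num)).mul_left M)

/-- Termwise differentiation of a power series. The derivative is the `d` for which
`s * d` is the sum of `m * u m * s ^ m`, which avoids the exponent `m - 1`. -/
lemma hasDerivAt_powerSeries {u : ℕ → ℂ} {M R : ℝ} (hR : 0 < R)
    (hu : ∀ m, ‖u m‖ ≤ M * R ^ m) {s : ℂ} (hs : s ∈ ball (0 : ℂ) (1 / (2 * R))) :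
    ∃ d, HasDerivAt (fun z => ∑' m, u m * z ^ m) d s ∧
      HasSum (fun m : ℕ => (m : ℂ) * (u m * s ^ m)) (s * d) := by
  have hsum : Summable fun m : ℕ => 2 * R * M * ((m : ℝ) ^ 1 * (1 / 2 : ℝ) ^ m) :=
    have hhalf : ‖(1 / 2 : ℝ)‖ < 1 := by norm_num
    Summable.mul_left _ (summable_pow_mul_geometric_of_norm_lt_one (R := ℝ) 1 hhalf)
  have hbd : ∀ (m : ℕ) (y : ℂ), y ∈ ball (0 : ℂ) (1 / (2 * R)) →
      ‖u m * ((m : ℂ) * y ^ (m - 1))‖ ≤ 2 * R * M * ((m : ℝ) ^ 1 * (1 / 2 : ℝ) ^ m) := by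
    intro m y hy
    rw [mem_ball_zero_iff] at hy
    rcases m with _ | m
    · simp
    rw [norm_mul, norm_mul, norm_pow, Complex.norm_natCast, Nat.add_sub_cancel]
    calc ‖u (m + 1)‖ * (((m + 1 : ℕ) : ℝ) * ‖y‖ ^ m)
        ≤ (M * R ^ (m + 1)) * (((m + 1 : ℕ) : ℝ) * (1 / (2 * R)) ^ m) := by
          refine mul_le_mul (hu _) ?_ (by positivity) ((norm_nonneg _).trans (hu _))
          gcongr
      _ = R * M * ((m + 1 : ℕ) : ℝ) * (R * (1 / (2 * R))) ^ m := by rw [mul_pow]; ring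
      _ = R * M * ((m + 1 : ℕ) : ℝ) * (1 / 2) ^ m := by congr 2; field_simp
      _ = _ := by ring
  refine ⟨∑' m : ℕ, u m * ((m : ℂ) * s ^ (m - 1)), ?_, ?_⟩
  · have h0 : Summable fun m => u m * s ^ m :=
      (summable_norm_powerSeries hR hu (mem_ball_zero_iff.1 hs).le).of_norm
    have hder : ∀ (m : ℕ) (y : ℂ), y ∈ ball (0 : ℂ) (1 / (2 * R)) →
        HasDerivAt (fun z => u m * z ^ m) (u m * ((m : ℂ) * y ^ (m - 1))) y :=
      fun m y _ => (hasDerivAt_pow m y).const_mul (u m)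
    exact hasDerivAt_tsum_of_isPreconnected (g := fun m z => u m * z ^ m)
      (g' := fun m z => u m * ((m : ℂ) * z ^ (m - 1))) hsum isOpen_ball
      (convex_ball (0 : ℂ) _).isPreconnected hder hbd hs h0 hs
  · have hd : Summable fun m : ℕ => u m * ((m : ℂ) * s ^ (m - 1)) :=
      Summable.of_norm_bounded hsum fun m => hbd m s hs
    refine (hd.hasSum.mul_left s).congr_both (fun m => ?_) rfl
    rcases m with _ | m
    · simp
    · rw [Nat.add_sub_cancel, pow_succ]; ring

/-- The differential equation `T F' - F = F G + α T²` for the regularised series `F = T f`. -/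
lemma series_equation {α : Fin 5 → ℂ} {a : ℕ → Fin 5 → ℂ} (h : ShiftedRec α a) {M R : ℝ}
    (hR : 0 < R) (ha : ∀ i m, ‖a m i‖ ≤ M * R ^ m) {s : ℂ}
    (hs : s ∈ ball (0 : ℂ) (1 / (2 * R))) (i : Fin 5) :
    ∃ d, HasDerivAt (fun z => ∑' m, a m i * z ^ m) d s ∧
      s * d - ∑' m, a m i * s ^ m =
        (∑' m, a m i * s ^ m) * altA4 (fun j => ∑' m, a m j * s ^ m) i + α i * s ^ 2 := by
  obtain ⟨d, hd, hsd⟩ := hasDerivAt_powerSeries hR (ha i) hs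
  refine ⟨d, hd, ?_⟩
  have hs' := (mem_ball_zero_iff.1 hs).le
  have hn : ∀ j, Summable fun m => ‖a m j * s ^ m‖ := fun j =>
    summable_norm_powerSeries hR (ha j) hs'
  have hF : ∀ j, HasSum (fun m => a m j * s ^ m) (∑' m, a m j * s ^ m) := fun j =>
    (hn j).of_norm.hasSum
  have hG : HasSum (fun m => altA4 (a m) i * s ^ m)
      (altA4 (fun j => ∑' m, a m j * s ^ m) i) := by
    refine ((((hF (i + 1)).sub (hF (i + 2))).add (hF (i + 3))).sub (hF (i + 4))).congr_both
      (fun m => ?_) rfl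
    simp only [altA4]
    ring
  have hGn : Summable fun m => ‖altA4 (a m) i * s ^ m‖ := by
    refine Summable.of_nonneg_of_le (fun _ => norm_nonneg _) (fun m => ?_)
      ((((hn (i + 1)).add (hn (i + 2))).add (hn (i + 3))).add (hn (i + 4)))
    have e : altA4 (a m) i * s ^ m = a m (i + 1) * s ^ m - a m (i + 2) * s ^ m +
        a m (i + 3) * s ^ m - a m (i + 4) * s ^ m := by simp only [altA4]; ring
    rw [e]
    refine (norm_sub_le _ _).trans (add_le_add_left ?_ _)
    refine (norm_add_le _ _).trans (add_le_add_left ?_ _)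
    exact norm_sub_le _ _
  have hP : HasSum (fun m => ∑ p ∈ Finset.range (m + 1),
      (a p i * s ^ p) * (altA4 (a (m - p)) i * s ^ (m - p)))
      ((∑' m, a m i * s ^ m) * altA4 (fun j => ∑' m, a m j * s ^ m) i) := by
    rw [← hG.tsum_eq]
    exact hasSum_sum_range_mul_of_summable_norm (f := fun m => a m i * s ^ m)
      (g := fun m => altA4 (a m) i * s ^ m) (hn i) hGn
  have hα : HasSum (fun m : ℕ => if m = 2 then α i * s ^ 2 else 0) (α i * s ^ 2) :=
    hasSum_ite_eq 2 _
  refine (hsd.sub (hF i)).unique ((hP.add hα).congr_both (fun m => ?_) rfl)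
  have e1 : ∑ p ∈ Finset.range (m + 1), (a p i * s ^ p) * (altA4 (a (m - p)) i * s ^ (m - p)) =
      (∑ p ∈ Finset.range (m + 1), a p i * altA4 (a (m - p)) i) * s ^ m := by
    rw [Finset.sum_mul]
    refine Finset.sum_congr rfl fun p hp => ?_
    rw [Finset.mem_range] at hp
    have : s ^ m = s ^ p * s ^ (m - p) := by rw [← pow_add]; congr 1; omega
    rw [this]; ring
  have e2 : (if m = 2 then α i * s ^ 2 else 0) = (if m = 2 then α i else 0) * s ^ m := by
    split_ifs with hm
    · rw [hm]
    · simp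
  rw [e1, e2, ← add_mul, ← h i m]
  ring

lemma hasSum_tail {u : ℕ → ℂ} {s : ℂ} (hs : s ≠ 0) (hu : Summable fun m => u m * s ^ m) :
    HasSum (fun m => u (m + 1) * s ^ m) ((∑' m, u m * s ^ m) / s - u 0 / s) := by
  have h1 := ((hasSum_nat_add_iff' 1).2 hu.hasSum).div_const s
  have e1 : (fun m => u (m + 1) * s ^ (m + 1) / s) = fun m => u (m + 1) * s ^ m := by
    funext m
    rw [pow_succ]; field_simp
  have e2 : (∑' m, u m * s ^ m - ∑ m ∈ Finset.range 1, u m * s ^ m) / s =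
      (∑' m, u m * s ^ m) / s - u 0 / s := by simp [sub_div]
  rwa [e1, e2] at h1

/-- Every formal meromorphic solution of the `A₄⁽¹⁾` system converges: the
Laurent series have positive radius of convergence and the resulting functions
solve the system on a punctured disk around `t₀`. -/
theorem convergence_A4 (α : Fin 5 → ℂ) (t0 : ℂ) (c : Fin 5 → ℤ → ℂ)
    (h : IsFormalMeromSolA4 α 1 c) :
    ∃ ε > (0 : ℝ),
      (∀ i : Fin 5, ∀ t ∈ ball t0 ε,
        Summable (fun n : ℕ => c i (n : ℤ) * (t - t0) ^ n)) ∧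
      (∀ i : Fin 5, ∀ t ∈ ball t0 ε \ {t0},
        HasDerivAt (laurentA4 t0 c i)
          (laurentA4 t0 c i t *
            (laurentA4 t0 c (i + 1) t - laurentA4 t0 c (i + 2) t +
              laurentA4 t0 c (i + 3) t - laurentA4 t0 c (i + 4) t) + α i) t) := by
  obtain ⟨a, hrec, ha_def⟩ : ∃ a : ℕ → Fin 5 → ℂ, ShiftedRec α a ∧
      ∀ m i, a m i = c i ((m : ℤ) - 1) := ⟨_, h.shiftedRec, fun _ _ => rfl⟩
  obtain ⟨R, hR, M, hM⟩ := shifted_bound hrec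
  have ha : ∀ i m, ‖a m i‖ ≤ M * R ^ m := fun i m => (norm_le_pi_norm _ i).trans (hM m)
  have hac : ∀ (i : Fin 5) (n : ℕ), c i (n : ℤ) = a (n + 1) i := fun i n => by
    simp [ha_def]
  have hmem : ∀ t ∈ ball t0 (1 / (2 * R)), t - t0 ∈ ball (0 : ℂ) (1 / (2 * R)) := fun t ht => by
    rwa [mem_ball_zero_iff, ← mem_ball_iff_norm]
  have hsum : ∀ i, ∀ t ∈ ball t0 (1 / (2 * R)), Summable fun m => a m i * (t - t0) ^ m :=
    fun i t ht =>
      (summable_norm_powerSeries hR (ha i) (mem_ball_zero_iff.1 (hmem t ht)).le).of_norm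
  have hL : ∀ i, ∀ t ∈ ball t0 (1 / (2 * R)) \ {t0},
      laurentA4 t0 c i t = (∑' m, a m i * (t - t0) ^ m) / (t - t0) := by
    intro i t ht
    have h0 : t - t0 ≠ 0 := sub_ne_zero.2 ht.2
    simp only [laurentA4, hac]
    rw [(hasSum_tail (u := fun m => a m i) h0 (hsum i t ht.1)).tsum_eq]
    simp [ha_def]
  refine ⟨1 / (2 * R), by positivity, fun i t ht => ?_, fun i t ht => ?_⟩
  · simp only [hac]
    by_cases h0 : t - t0 = 0
    -- `hasSum_tail` divides by `t - t0`, so the centre is treated separately.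
    · rw [h0]
      exact summable_of_ne_finset_zero (s := {0}) fun m hm => by
        simp [Finset.notMem_singleton.1 hm]
    · exact (hasSum_tail (u := fun m => a m i) h0 (hsum i t ht)).summable
  · have h0 : t - t0 ≠ 0 := sub_ne_zero.2 ht.2
    obtain ⟨d, hd, hde⟩ := series_equation hrec hR ha (hmem t ht.1) i
    have hd1 : HasDerivAt (fun z => ∑' m, a m i * (z - t0) ^ m) d t :=
      HasDerivAt.comp_sub_const (f := fun z => ∑' m, a m i * z ^ m) t t0 hd
    have hd2 := hd1.div ((hasDerivAt_id t).sub_const t0) h0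
    have hopen : IsOpen (ball t0 (1 / (2 * R)) \ {t0}) := isOpen_ball.sdiff isClosed_singleton
    have hd3 := hd2.congr_of_eventuallyEq
      (Filter.eventually_of_mem (hopen.mem_nhds ht) fun z hz => hL i z hz)
    refine hd3.congr_deriv ?_
    symm
    rw [hL _ t ht, hL _ t ht, hL _ t ht, hL _ t ht, hL _ t ht]
    simp only [altA4] at hde
    simp only [id]
    rw [eq_div_iff (pow_ne_zero 2 h0)]
    have hd' : d * (t - t0) - (∑' m, a m i * (t - t0) ^ m) * 1 =
        (t - t0) * d - ∑' m, a m i * (t - t0) ^ m := by ring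
    rw [hd', hde]
    field_simp
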